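/- Let x, y be probability vectors of dimension d with strictly positive entries. Then the following are equivalent: (i) for every ε > 0 there exists a probability vector x_ε of dimension d with ‖x − x_ε‖₁ ≤ ε and a probability vector c (of some finite dimension) such that x_ε⊗c ≺ y⊗c; (ii) H_α(x) ≥ H_α(y) for every real number α, where H_α(v) = (sgn(α)/(1−α)) ln Σ_i v_i^α for α ∉ {0,1}, H_1(v) = −Σ_i v_i ln v_i, and H_0(v) = ln |{i : v_i > 0}|. -/

import Mathlib

/-- The sum of the `k` largest entries of a vector (equivalently, for vectors with
nonnegative entries, the maximum of `∑ i ∈ s, x i` over subsets `s` of cardinality at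
most `k`; this also accounts for padding with zeros). -/
noncomputable def topSum {ι : Type*} [Fintype ι] [DecidableEq ι] (x : ι → ℝ) (k : ℕ) : ℝ :=
  ((Finset.univ : Finset ι).powerset.filter (fun s => s.card ≤ k)).sup'
    ⟨∅, by simp⟩ (fun s => ∑ i ∈ s, x i)

/-- A probability vector: nonnegative entries summing to 1. -/
def IsProbVec {ι : Type*} [Fintype ι] (x : ι → ℝ) : Prop :=
  (∀ i, 0 ≤ x i) ∧ ∑ i, x i = 1

/-- `x ≺ y` (majorization, after padding with zeros to a common dimension): every partial
sum of the `k` largest entries of `x` is at most that of `y`, with equal total sums. -/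
def PMaj {ι κ : Type*} [Fintype ι] [DecidableEq ι] [Fintype κ] [DecidableEq κ]
    (x : ι → ℝ) (y : κ → ℝ) : Prop :=
  (∀ k : ℕ, topSum x k ≤ topSum y k) ∧ (∑ i, x i = ∑ j, y j)

/-- Tensor product of two vectors: `(x ⊗ y)_{(i,j)} = x_i y_j`. -/
def pvTensor {ι κ : Type*} (x : ι → ℝ) (y : κ → ℝ) : ι × κ → ℝ :=
  fun p => x p.1 * y p.2

/-- The Rényi entropies `H_α`. -/
noncomputable def renyiH {ι : Type*} [Fintype ι] [DecidableEq ι] (α : ℝ) (v : ι → ℝ) : ℝ :=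
  if α = 0 then Real.log ((Finset.univ.filter (fun i => 0 < v i)).card)
  else if α = 1 then - ∑ i, v i * Real.log (v i)
  else (Real.sign α / (1 - α)) * Real.log (∑ i, v i ^ α)

open Polynomial

/-- A positive definite quadratic form stays nonnegative after replacing squares by falling
factorials, on the segment `k + m = N + 2` of the positive quadrant for suitable `N`. -/
theorem quad_falling_factorial_nonneg {a b c : ℝ} (ha : 0 < a) (hD : b ^ 2 < 4 * a * c) :
    ∃ N : ℕ, ∀ k m : ℝ, 0 ≤ k → 0 ≤ m → k + m = N + 2 →
      0 ≤ a * (k * (k - 1)) + b * (k * m) + c * (m * (m - 1)) := by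
  have hc : 0 < c := by nlinarith [sq_nonneg b]
  have hs : 0 < a - b + c := by nlinarith [sq_nonneg (a - c), sq_nonneg (a+c-b), sq_nonneg (a+c+b)]
  have hD' : 0 < 4 * a * c - b ^ 2 := by linarith
  obtain ⟨N, hN⟩ := exists_nat_ge ((a + c) * (4 * (a - b + c)) / (4 * a * c - b ^ 2))
  refine ⟨N, fun k m hk hm hkm => ?_⟩
  rw [div_le_iff₀ hD'] at hN
  have h1 : 4 * (a - b + c) * (a * k ^ 2 + b * k * m + c * m ^ 2) =
      (4 * a * c - b ^ 2) * (k + m) ^ 2 + ((2 * a - b) * k + (b - 2 * c) * m) ^ 2 := by ring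
  have h2 : a * k + c * m ≤ (a + c) * (k + m) := by nlinarith [mul_nonneg ha.le hm, mul_nonneg hc.le hk]
  have h3 : (a + c) * (4 * (a - b + c)) * (k + m) ≤ (4 * a * c - b ^ 2) * (k + m) ^ 2 := by
    have : (a + c) * (4 * (a - b + c)) ≤ (k + m) * (4 * a * c - b ^ 2) := by
      rw [hkm]; nlinarith
    nlinarith [mul_le_mul_of_nonneg_right this (add_nonneg hk hm)]
  have h4 : 0 ≤ 4 * (a - b + c) * (a * (k * (k - 1)) + b * (k * m) + c * (m * (m - 1))) := by
    nlinarith [sq_nonneg ((2 * a - b) * k + (b - 2 * c) * m), mul_le_mul_of_nonneg_left h2 hs.le]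
  exact nonneg_of_mul_nonneg_right h4 (by positivity)

theorem choose_two_shift (N k : ℕ) (hk : k ≤ N + 2) :
    ((N + 2 : ℝ) * (N + 1)) * (if 2 ≤ k then (N.choose (k - 2) : ℝ) else 0) =
        (N + 2).choose k * (k * (k - 1)) ∧
    ((N + 2 : ℝ) * (N + 1)) * (if 1 ≤ k then (N.choose (k - 1) : ℝ) else 0) =
        (N + 2).choose k * (k * (N + 2 - k)) ∧
    ((N + 2 : ℝ) * (N + 1)) * (N.choose k : ℝ) =
        (N + 2).choose k * ((N + 2 - k) * (N + 2 - k - 1)) := by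
  have up : ∀ n j : ℕ, ((n : ℝ) + 1) * n.choose j = (n + 1).choose (j + 1) * (j + 1) := by
    intro n j; exact_mod_cast Nat.add_one_mul_choose_eq n j
  have side : ∀ n j : ℕ, ((n : ℝ) + 1) * n.choose j = (n + 1).choose j * (n + 1 - j) := by
    intro n j
    rcases le_or_gt j (n + 1) with h | h
    · have := Nat.choose_mul_succ_eq n j
      have h2 : ((n.choose j * (n + 1) : ℕ) : ℝ) = ((n + 1).choose j * (n + 1 - j) : ℕ) := by
        exact_mod_cast this
      push_cast [h] at h2
      linarith
    · rw [Nat.choose_eq_zero_of_lt h, Nat.choose_eq_zero_of_lt (by omega)]; simp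
  refine ⟨?_, ?_, ?_⟩
  · split_ifs with h
    · obtain ⟨j, rfl⟩ := Nat.exists_eq_add_of_le' h
      have h1 := up N j
      have h2 := up (N + 1) (j + 1)
      push_cast at h1 h2 ⊢
      linear_combination (N + 2 : ℝ) * h1 + (j + 1 : ℝ) * h2
    · interval_cases k <;> simp
  · split_ifs with h
    · obtain ⟨j, rfl⟩ := Nat.exists_eq_add_of_le' h
      have h1 := side N j
      have h2 := up (N + 1) j
      push_cast at h1 h2 ⊢
      linear_combination (N + 2 : ℝ) * h1 + (N + 1 - j : ℝ) * h2
    · interval_cases k; simp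
  · have h1 := side N k
    have h2 := side (N + 1) k
    push_cast at h1 h2 ⊢
    linear_combination (N + 2 : ℝ) * h1 + (N + 1 - k : ℝ) * h2

theorem coeff_one_add_X_pow_mul_quadratic_nonneg {a b c : ℝ} (ha : 0 < a)
    (hD : b ^ 2 < 4 * a * c) :
    ∃ N : ℕ, ∀ k, 0 ≤ ((1 + X) ^ N * (C a * X ^ 2 + C b * X + C c)).coeff k := by
  obtain ⟨N, hN⟩ := quad_falling_factorial_nonneg ha hD
  refine ⟨N, fun k => ?_⟩
  have hcoeff : ((1 + X) ^ N * (C a * X ^ 2 + C b * X + C c)).coeff k =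
      a * (if 2 ≤ k then (N.choose (k - 2) : ℝ) else 0) +
      b * (if 1 ≤ k then (N.choose (k - 1) : ℝ) else 0) + c * N.choose k := by
    have : (1 + X) ^ N * (C a * X ^ 2 + C b * X + C c) =
      C a * ((1 + X) ^ N * X ^ 2) + C b * ((1 + X) ^ N * X ^ 1) + C c * (1 + X) ^ N := by ring
    rw [this]
    simp only [coeff_add, coeff_C_mul, coeff_mul_X_pow', coeff_one_add_X_pow]
  rw [hcoeff]
  rcases le_or_gt k (N + 2) with h | h
  · obtain ⟨h1, h2, h3⟩ := choose_two_shift N k h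
    have h' : (k : ℝ) ≤ N + 2 := by exact_mod_cast h
    have := hN k (N + 2 - k) (by positivity) (by linarith) (by ring)
    have h4 := mul_nonneg (Nat.cast_nonneg (α := ℝ) ((N + 2).choose k)) this
    refine nonneg_of_mul_nonneg_right (a := ((N + 2 : ℝ) * (N + 1))) ?_ (by positivity)
    refine h4.trans_eq ?_
    linear_combination -a * h1 - b * h2 - c * h3
  · rw [Nat.choose_eq_zero_of_lt (by omega : N < k), Nat.choose_eq_zero_of_lt (by omega : N < k - 1),
      Nat.choose_eq_zero_of_lt (by omega : N < k - 2)]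
    simp

theorem coeff_mul_nonneg {p q : ℝ[X]} (hp : ∀ k, 0 ≤ p.coeff k) (hq : ∀ k, 0 ≤ q.coeff k) (k : ℕ) :
    0 ≤ (p * q).coeff k := by
  rw [coeff_mul]
  exact Finset.sum_nonneg fun i _ => mul_nonneg (hp _) (hq _)

theorem exists_pow_coeff_const_sign_of_irreducible {p : ℝ[X]} (hp : Irreducible p)
    (h0 : ∀ z, 0 < z → p.eval z ≠ 0) :
    ∃ s : ℝ, s ≠ 0 ∧ ∃ N : ℕ, ∀ k, 0 ≤ ((1 + X) ^ N * (C s * p)).coeff k := by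
  have hdeg := hp.degree_le_two
  have hnd : p.natDegree ≤ 2 := natDegree_le_of_degree_le hdeg
  have hpos := hp.natDegree_pos
  rcases (by omega : p.natDegree = 1 ∨ p.natDegree = 2) with h1 | h2
  · obtain ⟨a, ha, b, rfl⟩ := natDegree_eq_one.mp h1
    refine ⟨a⁻¹, inv_ne_zero ha, 0, fun k => ?_⟩
    have hb : 0 ≤ a⁻¹ * b := by
      by_contra! hneg
      refine h0 (-(a⁻¹ * b)) (by linarith) ?_
      simp; field_simp; ring
    have : (1 + X) ^ 0 * (C a⁻¹ * (C a * X + C b)) = X + C (a⁻¹ * b) := by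
      rw [pow_zero, one_mul, mul_add, ← mul_assoc, ← C_mul, inv_mul_cancel₀ ha, C_1, one_mul, C_mul]
    rw [this, coeff_add, coeff_X, coeff_C]
    split_ifs <;> positivity
  · have hroot : ∀ z, ¬ p.IsRoot z := by
      intro z hz
      have : p.natDegree = 1 :=
        natDegree_eq_of_degree_eq_some (degree_eq_one_of_irreducible_of_root hp hz)
      omega
    set a := p.coeff 2
    set b := p.coeff 1
    set c := p.coeff 0
    have hpe : p = C a * X ^ 2 + C b * X + C c := eq_quadratic_of_degree_le_two hdeg
    have ha : a ≠ 0 := by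
      have : p.leadingCoeff ≠ 0 := leadingCoeff_ne_zero.mpr hp.ne_zero
      rwa [leadingCoeff, h2] at this
    have hD : b ^ 2 < 4 * a * c := by
      by_contra! hge
      refine hroot ((-b + √(b ^ 2 - 4 * a * c)) / (2 * a)) ?_
      have hs := Real.sq_sqrt (sub_nonneg.mpr hge)
      set r := √(b ^ 2 - 4 * a * c)
      rw [IsRoot, hpe]
      simp
      field_simp
      linear_combination hs
    obtain ⟨N, hN⟩ := coeff_one_add_X_pow_mul_quadratic_nonneg (a := a * a) (b := a * b) (c := a * c)
      (mul_self_pos.mpr ha) (by nlinarith [mul_pos (mul_self_pos.mpr ha) (sub_pos.mpr hD)])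
    refine ⟨a, ha, N, fun k => ?_⟩
    convert hN k using 3
    conv_lhs => rw [hpe]
    simp only [C_mul]
    ring

theorem exists_pow_coeff_const_sign (p : ℝ[X]) (h0 : ∀ z, 0 < z → p.eval z ≠ 0) :
    ∃ s : ℝ, s ≠ 0 ∧ ∃ N : ℕ, ∀ k, 0 ≤ ((1 + X) ^ N * (C s * p)).coeff k := by
  induction p using WfDvdMonoid.induction_on_irreducible with
  | zero => exact ⟨1, one_ne_zero, 0, by simp⟩
  | unit u hu =>
    obtain ⟨a, ha, rfl⟩ := isUnit_iff.mp hu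
    refine ⟨a⁻¹, inv_ne_zero ha.ne_zero, 0, fun k => ?_⟩
    rw [pow_zero, one_mul, ← C_mul, inv_mul_cancel₀ ha.ne_zero, coeff_C]
    split_ifs <;> simp
  | mul a i ha hi ih =>
    have h1 : ∀ z, 0 < z → i.eval z ≠ 0 := fun z hz h => h0 z hz (by simp [h])
    have h2 : ∀ z, 0 < z → a.eval z ≠ 0 := fun z hz h => h0 z hz (by simp [h])
    obtain ⟨s, hs, N, hN⟩ := exists_pow_coeff_const_sign_of_irreducible hi h1
    obtain ⟨t, ht, M, hM⟩ := ih h2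
    refine ⟨s * t, mul_ne_zero hs ht, N + M, fun k => ?_⟩
    convert coeff_mul_nonneg hN hM k using 2
    rw [C_mul]; ring

/-- **Poincaré–Pólya**: a polynomial positive on the positive half-line acquires nonnegative
coefficients after multiplication by a high power of `1 + X`. -/
theorem exists_one_add_X_pow_mul_coeff_nonneg (p : ℝ[X]) (h0 : ∀ z, 0 < z → 0 < p.eval z) :
    ∃ N : ℕ, ∀ k, 0 ≤ ((1 + X) ^ N * p).coeff k := by
  obtain ⟨s, hs, N, hN⟩ := exists_pow_coeff_const_sign p fun z hz => (h0 z hz).ne'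
  refine ⟨N, fun k => ?_⟩
  have hs' : 0 < s := by
    have h1 : 0 ≤ ((1 + X) ^ N * (C s * p)).eval 1 := by
      rw [eval_eq_sum]
      exact Finset.sum_nonneg fun i _ => by simpa using hN i
    rw [eval_mul, eval_mul, eval_C] at h1
    have h2 : 0 < ((1 + X : ℝ[X]) ^ N).eval 1 := by simp
    have h3 := nonneg_of_mul_nonneg_right h1 h2
    exact lt_of_le_of_ne (nonneg_of_mul_nonneg_left h3 (h0 1 one_pos)) hs.symm
  have h := hN k
  rw [mul_left_comm, coeff_C_mul] at h
  exact nonneg_of_mul_nonneg_right h hs'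

/-- The two-sided Laplace transform of a function that is positive at the right endpoint is
eventually positive. -/
theorem laplace_pos_of_large {H : ℝ → ℝ} (hH : Continuous H) {a b : ℝ} (hab : a < b)
    (hb : 0 < H b) :
    ∃ R : ℝ, ∀ α, R ≤ α → 0 < ∫ u in a..b, H u * Real.exp (α * u) := by
  obtain ⟨c, hac, hcb, hc⟩ : ∃ c, a < c ∧ c < b ∧ ∀ u ∈ Set.Icc c b, H b / 2 ≤ H u := by
    have h1 : ∀ᶠ u in nhds b, H b / 2 < H u :=
      hH.continuousAt.eventually_const_lt (by linarith)
    obtain ⟨δ, hδ, h⟩ := Metric.eventually_nhds_iff.mp h1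
    refine ⟨max ((a + b) / 2) (b - δ / 2), lt_max_of_lt_left (by linarith),
      max_lt (by linarith) (by linarith), fun u hu => (h ?_).le⟩
    have := (max_le_iff.mp hu.1).2
    rw [Real.dist_eq, abs_lt]
    constructor <;> linarith [hu.2]
  obtain ⟨M, hM⟩ := (isCompact_Icc (a := a) (b := b)).exists_bound_of_continuousOn hH.continuousOn
  have hM0 : 0 ≤ M := (norm_nonneg _).trans (hM b ⟨hab.le, le_rfl⟩)
  set κ := H b / 2 with hκ
  have hκ0 : 0 < κ := by positivity
  have hcb' : 0 < b - c := sub_pos.mpr hcb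
  refine ⟨M / (κ * (b - c)) + 1, fun α hα => ?_⟩
  have hdiv : 0 ≤ M / (κ * (b - c)) := by positivity
  have hα0 : 0 < α := by linarith
  have hαM : M < α * (κ * (b - c)) := by
    rw [← div_lt_iff₀ (by positivity)]; linarith
  have hexp : ∀ s t : ℝ, ∫ u in s..t, Real.exp (α * u) =
      (Real.exp (α * t) - Real.exp (α * s)) / α := by
    intro s t
    rw [intervalIntegral.integral_comp_mul_left _ hα0.ne', integral_exp, smul_eq_mul]
    field_simp
  have hint : ∀ s t : ℝ, IntervalIntegrable (fun u => H u * Real.exp (α * u))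
      MeasureTheory.volume s t := fun s t => by
    apply Continuous.intervalIntegrable; fun_prop
  have hint' : ∀ (K s t : ℝ), IntervalIntegrable (fun u => K * Real.exp (α * u))
      MeasureTheory.volume s t := fun K s t => by
    apply Continuous.intervalIntegrable; fun_prop
  rw [← intervalIntegral.integral_add_adjacent_intervals (hint a c) (hint c b)]
  have h1 : ∫ u in a..c, -M * Real.exp (α * u) ≤ ∫ u in a..c, H u * Real.exp (α * u) := by
    refine intervalIntegral.integral_mono_on hac.le (hint' _ _ _) (hint _ _) fun u hu => ?_
    have := hM u ⟨hu.1, hu.2.trans hcb.le⟩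
    exact mul_le_mul_of_nonneg_right (neg_le_of_abs_le this) (Real.exp_pos _).le
  have h2 : ∫ u in c..b, κ * Real.exp (α * u) ≤ ∫ u in c..b, H u * Real.exp (α * u) := by
    refine intervalIntegral.integral_mono_on hcb.le (hint' _ _ _) (hint _ _) fun u hu => ?_
    exact mul_le_mul_of_nonneg_right (hc u hu) (Real.exp_pos _).le
  rw [intervalIntegral.integral_const_mul, hexp] at h1 h2
  refine lt_of_lt_of_le ?_ (add_le_add h1 h2)
  have h3 : Real.exp (α * b) = Real.exp (α * c) * Real.exp (α * (b - c)) := by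
    rw [← Real.exp_add]; ring_nf
  have h4 := Real.add_one_le_exp (α * (b - c))
  have h5 : 0 < κ * Real.exp (α * (b - c)) - κ - M := by nlinarith
  have h6 : -M * ((Real.exp (α * c) - Real.exp (α * a)) / α) +
      κ * ((Real.exp (α * b) - Real.exp (α * c)) / α) =
      (Real.exp (α * c) * (κ * Real.exp (α * (b - c)) - κ - M) + M * Real.exp (α * a)) / α := by
    rw [h3]; field_simp; ring
  rw [h6]
  have := mul_pos (Real.exp_pos (α * c)) h5
  positivity

theorem laplace_pos_of_abs_large {H : ℝ → ℝ} (hH : Continuous H) {a b : ℝ} (hab : a < b)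
    (ha : 0 < H a) (hb : 0 < H b) :
    ∃ R : ℝ, ∀ α, R ≤ |α| → 0 < ∫ u in a..b, H u * Real.exp (α * u) := by
  obtain ⟨R, hR⟩ := laplace_pos_of_large hH hab hb
  obtain ⟨R', hR'⟩ := laplace_pos_of_large (H := fun u => H (-u)) (by fun_prop)
    (neg_lt_neg hab) (by simpa using ha)
  refine ⟨max R R', fun α hα => ?_⟩
  rcases abs_cases α with ⟨h, -⟩ | ⟨h, -⟩
  · exact hR α ((le_max_left _ _).trans (hα.trans_eq h))
  · have h1 := hR' (-α) ((le_max_right _ _).trans (hα.trans_eq h))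
    have h2 := intervalIntegral.integral_comp_neg (a := -b) (b := -a)
      (fun u => H u * Real.exp (α * u))
    simp only [neg_neg, mul_neg] at h2
    rw [← h2]
    simpa only [neg_mul] using h1

theorem eventually_pos_of_pos {f : ℝ → ℝ → ℝ} (hf : Continuous (Function.uncurry f))
    (h0 : ∀ α, 0 < f 0 α) {R : ℝ} (hR : ∀ᶠ τ in nhdsWithin 0 (Set.Ioi 0), ∀ α, R ≤ |α| → 0 < f τ α) :
    ∀ᶠ τ in nhdsWithin 0 (Set.Ioi 0), ∀ α, 0 < f τ α := by
  have h1 : ∀ᶠ τ in nhds 0, ∀ α ∈ Set.Icc (-R) R, 0 < f τ α :=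
    isCompact_Icc.eventually_forall_of_forall_eventually fun α _ =>
      hf.continuousAt.eventually_const_lt (h0 α)
  filter_upwards [hR, nhdsWithin_le_nhds h1] with τ h2 h3 α
  rcases le_total R |α| with h | h
  · exact h2 α h
  · exact h3 α (abs_le.mp h)

theorem exists_sub_const_laplace_pos {G : ℝ → ℝ} (hG : Continuous G) {a b : ℝ} (hab : a < b)
    (ha : 0 < G a) (hb : 0 < G b) (hpos : ∀ α, 0 < ∫ u in a..b, G u * Real.exp (α * u)) :
    ∃ ω > 0, ∀ α, 0 < ∫ u in a..b, (G u - ω) * Real.exp (α * u) := by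
  set m := min (G a) (G b) / 2
  have hm : 0 < m := half_pos (lt_min ha hb)
  have hma : m < G a := by have := min_le_left (G a) (G b); grind
  have hmb : m < G b := by have := min_le_right (G a) (G b); grind
  obtain ⟨R, hR⟩ := laplace_pos_of_abs_large (H := fun u => G u - m) (by fun_prop) hab
    (sub_pos.mpr hma) (sub_pos.mpr hmb)
  have key : ∀ᶠ ω in nhdsWithin 0 (Set.Ioi 0),
      ∀ α, 0 < ∫ u in a..b, (G u - ω) * Real.exp (α * u) := by
    refine eventually_pos_of_pos (R := R)
      (f := fun ω α => ∫ u in a..b, (G u - ω) * Real.exp (α * u)) ?_ (by simpa using hpos) ?_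
    · refine intervalIntegral.continuous_parametric_intervalIntegral_of_continuous'
        (f := fun (q : ℝ × ℝ) u => (G u - q.1) * Real.exp (q.2 * u)) ?_ a b
      simp only [Function.uncurry_def]
      fun_prop
    · filter_upwards [nhdsWithin_le_nhds (Iio_mem_nhds hm)] with ω hω α hα
      refine (hR α hα).trans_le (intervalIntegral.integral_mono_on hab.le ?_ ?_ fun u _ => ?_)
      · apply Continuous.intervalIntegrable; fun_prop
      · apply Continuous.intervalIntegrable; fun_prop
      · exact mul_le_mul_of_nonneg_right (sub_le_sub_left (le_of_lt hω) _) (Real.exp_pos _).le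
  obtain ⟨ω, h1, h2⟩ := (key.and self_mem_nhdsWithin).exists
  exact ⟨ω, h2, h1⟩

theorem exists_shrink_laplace_pos {G : ℝ → ℝ} (hG : Continuous G) {A A' B' B : ℝ}
    (hAA : A < A') (hBB : B' < B) (hAB : A < B)
    (hA : ∀ u ∈ Set.Ioo A A', 0 < G u) (hB : ∀ u ∈ Set.Ioo B' B, 0 < G u)
    (hpos : ∀ α, 0 < ∫ u in A..B, G u * Real.exp (α * u)) :
    ∃ a b, a < b ∧ a ∈ Set.Ioo A A' ∧ b ∈ Set.Ioo B' B ∧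
      ∀ α, 0 < ∫ u in a..b, G u * Real.exp (α * u) := by
  set m := min (min (A' - A) (B - B')) (B - A) / 3
  have hm : 0 < m := by
    have : 0 < min (min (A' - A) (B - B')) (B - A) := by simp [hAA, hBB, hAB]
    positivity
  have hm1 : m < A' - A := by grind
  have hm2 : m < B - B' := by grind
  have hm3 : 2 * m < B - A := by grind
  obtain ⟨R, hR⟩ := laplace_pos_of_abs_large hG (a := A + m) (b := B - m) (by linarith)
    (hA _ ⟨by linarith, by linarith⟩) (hB _ ⟨by linarith, by linarith⟩)
  have hint : ∀ α s t : ℝ, IntervalIntegrable (fun u => G u * Real.exp (α * u))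
      MeasureTheory.volume s t := fun α s t => by
    apply Continuous.intervalIntegrable; fun_prop
  have key : ∀ᶠ τ in nhdsWithin 0 (Set.Ioi 0),
      ∀ α, 0 < ∫ u in (A + τ)..(B - τ), G u * Real.exp (α * u) := by
    refine eventually_pos_of_pos (R := R)
      (f := fun τ α => ∫ u in (A + τ)..(B - τ), G u * Real.exp (α * u)) ?_ (by simpa using hpos) ?_
    · have hc : ∀ s : ℝ × ℝ → ℝ, Continuous s →
          Continuous fun q : ℝ × ℝ => ∫ u in A..s q, G u * Real.exp (q.2 * u) := by
        intro s hs
        refine intervalIntegral.continuous_parametric_intervalIntegral_of_continuous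
          (f := fun (q : ℝ × ℝ) u => G u * Real.exp (q.2 * u)) ?_ hs
        simp only [Function.uncurry_def]
        fun_prop
      have := (hc (fun q => B - q.1) (by fun_prop)).sub (hc (fun q => A + q.1) (by fun_prop))
      refine this.congr fun q => ?_
      exact intervalIntegral.integral_interval_sub_left (hint _ _ _) (hint _ _ _)
    · filter_upwards [nhdsWithin_le_nhds (Iio_mem_nhds hm), self_mem_nhdsWithin] with τ hτ hτ0 α hα
      simp only [Set.mem_Iio, Set.mem_Ioi] at hτ hτ0
      rw [← intervalIntegral.integral_add_adjacent_intervals (hint α (A + τ) (A + m)) (hint α _ _),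
        ← intervalIntegral.integral_add_adjacent_intervals (hint α (A + m) (B - m)) (hint α _ _)]
      have h1 : 0 ≤ ∫ u in (A + τ)..(A + m), G u * Real.exp (α * u) :=
        intervalIntegral.integral_nonneg (by linarith) fun u hu =>
          mul_nonneg (hA u ⟨by linarith [hu.1], by linarith [hu.2]⟩).le (Real.exp_pos _).le
      have h2 : 0 ≤ ∫ u in (B - m)..(B - τ), G u * Real.exp (α * u) :=
        intervalIntegral.integral_nonneg (by linarith) fun u hu =>
          mul_nonneg (hB u ⟨by linarith [hu.1], by linarith [hu.2]⟩).le (Real.exp_pos _).le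
      linarith [hR α hα]
  obtain ⟨τ, h1, h2, h3⟩ :=
    (key.and (Filter.Eventually.and self_mem_nhdsWithin (nhdsWithin_le_nhds (Iio_mem_nhds hm)))).exists
  exact ⟨A + τ, B - τ, by linarith, ⟨by linarith, by linarith⟩, ⟨by linarith, by linarith⟩, h1⟩

theorem exists_step_polynomial {G : ℝ → ℝ} (hG : Continuous G) {a b ω : ℝ} (hab : a < b)
    (hω : 0 < ω) (hpos : ∀ α, 0 < ∫ u in a..b, (G u - ω) * Real.exp (α * u)) :
    ∃ (η : ℝ) (n : ℕ) (p : ℕ → ℝ), 0 < η ∧ a + n * η = b ∧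
      (∀ i < n, ∀ u ∈ Set.Icc (a + i * η) (a + (i + 1) * η), p i ≤ G u) ∧
      ∀ z, 0 < z → 0 < ∑ i ∈ Finset.range n, p i * z ^ i := by
  have huc := isCompact_Icc.uniformContinuousOn_of_continuous (hG.continuousOn (s := Set.Icc a b))
  obtain ⟨δ, hδ, hδG⟩ := Metric.uniformContinuousOn_iff.mp huc (ω / 2) (half_pos hω)
  obtain ⟨n, hn⟩ := exists_nat_gt ((b - a) / δ)
  have hn0 : (0 : ℝ) < n := (div_pos (sub_pos.mpr hab) hδ).trans hn
  set η := (b - a) / n with hη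
  have hη0 : 0 < η := div_pos (sub_pos.mpr hab) hn0
  have hηδ : η < δ := by rw [hη, div_lt_iff₀ hn0]; rwa [div_lt_iff₀' hδ] at hn
  have hnη : a + n * η = b := by rw [hη]; field_simp; ring
  have hmem : ∀ i < n, ∀ u ∈ Set.Icc (a + i * η) (a + (i + 1) * η), u ∈ Set.Icc a b := by
    intro i hi u hu
    have : ((i : ℝ) + 1) ≤ n := by exact_mod_cast hi
    have h1 := mul_le_mul_of_nonneg_right this hη0.le
    have h2 : 0 ≤ (i : ℝ) * η := by positivity
    exact ⟨by linarith [hu.1], by linarith [hu.2]⟩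
  have hclose : ∀ i < n, ∀ u ∈ Set.Icc (a + i * η) (a + (i + 1) * η),
      |G u - G (a + i * η)| < ω / 2 := by
    intro i hi u hu
    refine hδG u (hmem i hi u hu) _ (hmem i hi _ ⟨le_rfl, by linarith⟩) ?_
    rw [Real.dist_eq, abs_lt]
    constructor <;> linarith [hu.1, hu.2]
  refine ⟨η, n, fun i => G (a + i * η) - ω / 2, hη0, hnη, fun i hi u hu => ?_, fun z hz => ?_⟩
  · linarith [(abs_lt.mp (hclose i hi u hu)).1]
  · set α := Real.log z / η
    have hz' : ∀ i : ℕ, Real.exp (α * (i * η)) = z ^ i := by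
      intro i
      rw [show α * (i * η) = i * Real.log z by simp only [α]; field_simp, Real.exp_nat_mul,
        Real.exp_log hz]
    set W := ∫ u in a..(a + η), Real.exp (α * u) with hW
    have hW0 : 0 < W := by
      refine intervalIntegral.intervalIntegral_pos_of_pos ?_ (fun u => Real.exp_pos _) (by linarith)
      apply Continuous.intervalIntegrable; fun_prop
    have hcell : ∀ i : ℕ, ∫ u in (a + i * η)..(a + ((i + 1 : ℕ) : ℝ) * η), Real.exp (α * u) =
        z ^ i * W := by
      intro i
      rw [hW, ← intervalIntegral.integral_const_mul, ← hz' i]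
      have := intervalIntegral.integral_comp_add_right (a := a) (b := a + η)
        (fun u => Real.exp (α * u)) (i * η)
      rw [show a + ((i + 1 : ℕ) : ℝ) * η = a + η + i * η by push_cast; ring, ← this]
      refine intervalIntegral.integral_congr fun u _ => ?_
      rw [← Real.exp_add]; ring_nf
    have hle : ∫ u in a..b, (G u - ω) * Real.exp (α * u) ≤
        (∑ i ∈ Finset.range n, (G (a + i * η) - ω / 2) * z ^ i) * W := by
      have hsum := intervalIntegral.sum_integral_adjacent_intervals (n := n)
        (a := fun i : ℕ => a + i * η) (f := fun u => (G u - ω) * Real.exp (α * u))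
        (μ := MeasureTheory.volume)
        (fun k _ => by apply Continuous.intervalIntegrable; fun_prop)
      simp only [Nat.cast_zero, zero_mul, add_zero, hnη] at hsum
      rw [← hsum, Finset.sum_mul]
      refine Finset.sum_le_sum fun i hi => ?_
      rw [mul_assoc, ← hcell i, ← intervalIntegral.integral_const_mul]
      refine intervalIntegral.integral_mono_on (by push_cast; nlinarith) ?_ ?_ fun u hu => ?_
      · apply Continuous.intervalIntegrable; fun_prop
      · apply Continuous.intervalIntegrable; fun_prop
      · refine mul_le_mul_of_nonneg_right ?_ (Real.exp_pos _).le
        push_cast at hu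
        linarith [(abs_lt.mp (hclose i (Finset.mem_range.mp hi) u hu)).2]
    exact (mul_pos_iff_of_pos_right hW0).mp ((hpos α).trans_le hle)

theorem exists_binomial_convolution_nonneg_of_sub {G : ℝ → ℝ} (hG : Continuous G) {a b ω : ℝ}
    (hab : a < b) (hω : 0 < ω) (hout : ∀ u, u ∉ Set.Ico a b → 0 ≤ G u)
    (hpos : ∀ α, 0 < ∫ u in a..b, (G u - ω) * Real.exp (α * u)) :
    ∃ (η : ℝ) (N : ℕ), ∀ u, 0 ≤ ∑ k ∈ Finset.range (N + 1), (N.choose k : ℝ) * G (u - k * η) := by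
  obtain ⟨η, n, p, hη, hnη, hpG, hp⟩ := exists_step_polynomial hG hab hω hpos
  set P : ℝ[X] := ∑ i ∈ Finset.range n, C (p i) * X ^ i with hP
  have hPcoeff : ∀ i, P.coeff i = if i < n then p i else 0 := by
    intro i
    simp [hP, coeff_X_pow]
  obtain ⟨N, hN⟩ := exists_one_add_X_pow_mul_coeff_nonneg P fun z hz => by
    simpa [hP, eval_finsetSum] using hp z hz
  refine ⟨η, N, fun u => ?_⟩
  set j : ℤ := ⌊(u - a) / η⌋ with hj
  have hj1 : j * η ≤ u - a := by rw [← le_div_iff₀ hη]; exact Int.floor_le _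
  have hj2 : u - a < (j + 1) * η := by rw [← div_lt_iff₀ hη]; exact Int.lt_floor_add_one _
  have hq : ∀ k : ℕ, (if (k : ℤ) ≤ j then P.coeff (j - k).toNat else 0) ≤ G (u - k * η) := by
    intro k
    split_ifs with hk
    · obtain ⟨i, hi⟩ := Int.eq_ofNat_of_zero_le (sub_nonneg.mpr hk)
      have hi' : (j : ℝ) = k + i := by exact_mod_cast (by omega : j = k + i)
      rw [hi, Int.toNat_natCast, hPcoeff]
      rw [hi'] at hj1 hj2
      split_ifs with hin
      · exact hpG i hin _ ⟨by linarith, by linarith⟩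
      · refine hout _ fun h => ?_
        have : (n : ℝ) ≤ i := by exact_mod_cast not_lt.mp hin
        have := mul_le_mul_of_nonneg_right this hη.le
        linarith [h.2]
    · refine hout _ fun h => ?_
      have : (j : ℝ) + 1 ≤ k := by exact_mod_cast not_le.mp hk
      have := mul_le_mul_of_nonneg_right this hη.le
      linarith [h.1]
  refine le_trans ?_ (Finset.sum_le_sum fun k _ =>
    mul_le_mul_of_nonneg_left (hq k) (Nat.cast_nonneg _))
  rcases lt_or_ge j 0 with hneg | hnn
  · refine Finset.sum_nonneg fun k _ => ?_
    rw [if_neg (by omega), mul_zero]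
  · obtain ⟨m, hm⟩ := Int.eq_ofNat_of_zero_le hnn
    have h := hN m
    rw [coeff_mul, Finset.Nat.sum_antidiagonal_eq_sum_range_succ_mk] at h
    simp only [coeff_one_add_X_pow] at h
    refine h.trans_eq ?_
    rw [hm]
    have e1 : ∀ k : ℕ, (if (k : ℤ) ≤ (m : ℤ) then P.coeff ((m : ℤ) - k).toNat else 0) =
        if k ∈ Finset.range (m + 1) then P.coeff (m - k) else 0 := by
      intro k
      simp only [Finset.mem_range, Nat.lt_succ_iff]
      by_cases hk : k ≤ m
      · rw [if_pos hk, if_pos (by simpa using hk)]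
        congr 1
        omega
      · rw [if_neg hk, if_neg (by simpa using hk)]
    simp only [e1, mul_ite, mul_zero]
    rw [Finset.sum_ite_mem]
    symm
    refine Finset.sum_subset Finset.inter_subset_right fun k hk hk' => ?_
    rw [Nat.choose_eq_zero_of_lt (by grind), Nat.cast_zero, zero_mul]

/-- A compactly supported function, positive near both ends of its support and with positive
Laplace transform, becomes nonnegative after convolution with a binomial distribution. -/
theorem exists_binomial_convolution_nonneg {G : ℝ → ℝ} (hG : Continuous G) {A A' B' B : ℝ}
    (hAA : A < A') (hBB : B' < B) (hAB : A < B)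
    (hA : ∀ u ∈ Set.Ioo A A', 0 < G u) (hB : ∀ u ∈ Set.Ioo B' B, 0 < G u)
    (hout : ∀ u, u ∉ Set.Ioo A B → G u = 0)
    (hpos : ∀ α, 0 < ∫ u in A..B, G u * Real.exp (α * u)) :
    ∃ (η : ℝ) (N : ℕ), ∀ u, 0 ≤ ∑ k ∈ Finset.range (N + 1), (N.choose k : ℝ) * G (u - k * η) := by
  obtain ⟨a, b, hab, ha, hb, hpos'⟩ := exists_shrink_laplace_pos hG hAA hBB hAB hA hB hpos
  obtain ⟨ω, hω, hω'⟩ := exists_sub_const_laplace_pos hG hab (hA a ha) (hB b hb) hpos'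
  refine exists_binomial_convolution_nonneg_of_sub hG hab hω (fun u hu => ?_) hω'
  by_cases h : u ∈ Set.Ioo A B
  · rcases lt_or_ge u a with h1 | h1
    · exact (hA u ⟨h.1, h1.trans ha.2⟩).le
    · have h2 : b ≤ u := not_lt.mp fun h2 => hu ⟨h1, h2⟩
      exact (hB u ⟨hb.1.trans_le h2, h.2⟩).le
  · exact (hout u h).ge

theorem topSum_le_sum_max {ι : Type*} [Fintype ι] [DecidableEq ι] (x : ι → ℝ) (k : ℕ) {t : ℝ}
    (ht : 0 ≤ t) : topSum x k ≤ k * t + ∑ i, max (x i - t) 0 := by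
  refine Finset.sup'_le _ _ fun s hs => ?_
  have hs : s.card ≤ k := (Finset.mem_filter.mp hs).2
  calc ∑ i ∈ s, x i ≤ ∑ i ∈ s, (t + max (x i - t) 0) :=
        Finset.sum_le_sum fun i _ => by linarith [le_max_left (x i - t) 0]
    _ = s.card * t + ∑ i ∈ s, max (x i - t) 0 := by
        rw [Finset.sum_add_distrib, Finset.sum_const, nsmul_eq_mul]
    _ ≤ k * t + ∑ i, max (x i - t) 0 :=
        add_le_add (mul_le_mul_of_nonneg_right (by exact_mod_cast hs) ht)
          (Finset.sum_le_sum_of_subset_of_nonneg (Finset.subset_univ s)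
            fun i _ _ => le_max_right _ _)

theorem sum_le_topSum {ι : Type*} [Fintype ι] [DecidableEq ι] (x : ι → ℝ) {k : ℕ} {s : Finset ι}
    (hs : s.card ≤ k) : ∑ i ∈ s, x i ≤ topSum x k :=
  Finset.le_sup' (fun s => ∑ i ∈ s, x i)
    (Finset.mem_filter.mpr ⟨Finset.mem_powerset.mpr (Finset.subset_univ s), hs⟩)

theorem exists_sum_max_le_topSum {ι : Type*} [Fintype ι] [DecidableEq ι] {y : ι → ℝ}
    (hy : ∀ i, 0 ≤ y i) (k : ℕ) :
    ∃ t, 0 ≤ t ∧ k * t + ∑ i, max (y i - t) 0 ≤ topSum y k := by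
  rcases le_or_gt (Fintype.card ι) k with hk | hk
  · refine ⟨0, le_rfl, ?_⟩
    simpa [max_eq_left (hy _)] using sum_le_topSum y (s := Finset.univ) hk
  rcases Nat.eq_zero_or_pos k with rfl | hk0
  · refine ⟨∑ i, y i, Finset.sum_nonneg fun i _ => hy i, ?_⟩
    have : ∀ i, max (y i - ∑ j, y j) 0 = 0 := fun i => max_eq_right
      (sub_nonpos.mpr (Finset.single_le_sum (fun j _ => hy j) (Finset.mem_univ i)))
    simpa [this] using sum_le_topSum y (k := 0) (s := ∅) (by simp)
  obtain ⟨s, hs, hmax⟩ := Finset.exists_max_image (Finset.powersetCard k Finset.univ)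
    (fun s => ∑ i ∈ s, y i) (Finset.powersetCard_nonempty.mpr (by simpa using hk.le))
  have hcard := (Finset.mem_powersetCard.mp hs).2
  obtain ⟨j, hj, hjmin⟩ := Finset.exists_min_image s y (Finset.card_pos.mp (hcard ▸ hk0))
  have hle : ∀ i ∉ s, y i ≤ y j := by
    intro i hi
    have hi' : i ∉ s.erase j := fun h => hi (Finset.mem_of_mem_erase h)
    have h := hmax (insert i (s.erase j)) (by
      rw [Finset.mem_powersetCard, Finset.card_insert_of_notMem hi',
        Finset.card_erase_of_mem hj]
      exact ⟨Finset.subset_univ _, by omega⟩)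
    rw [Finset.sum_insert hi', ← Finset.add_sum_erase s y hj] at h
    linarith
  refine ⟨y j, hy j, le_trans (le_of_eq ?_) (sum_le_topSum y hcard.le)⟩
  rw [← Finset.sum_subset (Finset.subset_univ s)
    fun i _ hi => max_eq_right (sub_nonpos.mpr (hle i hi)),
    Finset.sum_congr rfl fun i hi => max_eq_left (sub_nonneg.mpr (hjmin i hi)),
    Finset.sum_sub_distrib, Finset.sum_const, hcard, nsmul_eq_mul]
  ring

theorem PMaj.of_sum_max_le {ι κ : Type*} [Fintype ι] [DecidableEq ι] [Fintype κ] [DecidableEq κ]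
    {x : ι → ℝ} {y : κ → ℝ} (hx : ∀ i, 0 ≤ x i) (hy : ∀ i, 0 ≤ y i)
    (hsum : ∑ i, x i = ∑ i, y i)
    (h : ∀ t, 0 < t → ∑ i, max (x i - t) 0 ≤ ∑ i, max (y i - t) 0) : PMaj x y := by
  refine ⟨fun k => ?_, hsum⟩
  obtain ⟨t, ht, hty⟩ := exists_sum_max_le_topSum hy k
  refine (topSum_le_sum_max x k ht).trans (le_trans ?_ hty)
  rcases ht.eq_or_lt with rfl | ht
  · simp [max_eq_left (hx _), max_eq_left (hy _), hsum]
  · linarith [h t ht]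

theorem PMaj.sum_max_le {ι κ : Type*} [Fintype ι] [DecidableEq ι] [Fintype κ] [DecidableEq κ]
    {x : ι → ℝ} {y : κ → ℝ} (h : PMaj x y) {t : ℝ} (ht : 0 ≤ t) :
    ∑ i, max (x i - t) 0 ≤ ∑ i, max (y i - t) 0 := by
  set s := Finset.univ.filter fun i => t < x i with hs
  have h1 : ∑ i, max (x i - t) 0 = ∑ i ∈ s, x i - s.card * t := by
    rw [← Finset.sum_subset (Finset.subset_univ s)
      fun i _ hi => max_eq_right (sub_nonpos.mpr (by simpa [hs] using hi)),
      Finset.sum_congr rfl fun i hi =>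
        max_eq_left (sub_nonneg.mpr (le_of_lt (by simpa [hs] using hi))),
      Finset.sum_sub_distrib, Finset.sum_const, nsmul_eq_mul]
  linarith [sum_le_topSum x (le_refl s.card), h.1 s.card, topSum_le_sum_max y s.card ht]

/-- The hinge transform of a vector on the logarithmic scale: `∑ i, (v i * e⁻ᵘ - 1)⁺`. -/
noncomputable def hinge {ι : Type*} [Fintype ι] (v : ι → ℝ) (u : ℝ) : ℝ :=
  ∑ i, max (v i * Real.exp (-u) - 1) 0

theorem continuous_hinge {ι : Type*} [Fintype ι] (v : ι → ℝ) : Continuous (hinge v) := by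
  unfold hinge
  fun_prop

theorem sum_max_sub_exp {ι : Type*} [Fintype ι] (v : ι → ℝ) (u : ℝ) :
    ∑ i, max (v i - Real.exp u) 0 = Real.exp u * hinge v u := by
  rw [hinge, Finset.mul_sum]
  refine Finset.sum_congr rfl fun i _ => ?_
  rw [mul_max_of_nonneg _ _ (Real.exp_pos u).le, mul_zero, mul_sub, mul_one, mul_left_comm,
    ← Real.exp_add, add_neg_cancel, Real.exp_zero, mul_one]

theorem hinge_eq_zero {ι : Type*} [Fintype ι] {v : ι → ℝ} {u : ℝ} (h : ∀ i, v i ≤ Real.exp u) :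
    hinge v u = 0 := by
  refine Finset.sum_eq_zero fun i _ => max_eq_right ?_
  rw [sub_nonpos, Real.exp_neg, mul_inv_le_iff₀ (Real.exp_pos u), one_mul]
  exact h i

theorem sum_sub_card_le_hinge {ι : Type*} [Fintype ι] (v : ι → ℝ) (u : ℝ) :
    (∑ i, v i) * Real.exp (-u) - Fintype.card ι ≤ hinge v u := by
  have : (∑ i, v i) * Real.exp (-u) - Fintype.card ι = ∑ i, (v i * Real.exp (-u) - 1) := by
    rw [Finset.sum_sub_distrib, Finset.sum_mul]; simp
  rw [this]
  exact Finset.sum_le_sum fun i _ => le_max_left _ _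

theorem hinge_eq_sum_sub_card {ι : Type*} [Fintype ι] {v : ι → ℝ} {u : ℝ}
    (h : ∀ i, Real.exp u ≤ v i) :
    hinge v u = (∑ i, v i) * Real.exp (-u) - Fintype.card ι := by
  have : (∑ i, v i) * Real.exp (-u) - Fintype.card ι = ∑ i, (v i * Real.exp (-u) - 1) := by
    rw [Finset.sum_sub_distrib, Finset.sum_mul]; simp
  rw [this]
  refine Finset.sum_congr rfl fun i _ => max_eq_left ?_
  rw [sub_nonneg, Real.exp_neg, le_mul_inv_iff₀ (Real.exp_pos u), one_mul]
  exact h i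

theorem hinge_pos {ι : Type*} [Fintype ι] {v : ι → ℝ} {u : ℝ} {i : ι} (h : Real.exp u < v i) :
    0 < hinge v u := by
  refine Finset.sum_pos' (fun i _ => le_max_right _ _) ⟨i, Finset.mem_univ i, lt_max_of_lt_left ?_⟩
  rw [sub_pos, Real.exp_neg, lt_mul_inv_iff₀ (Real.exp_pos u), one_mul]
  exact h

theorem sum_sub_card_lt_hinge {ι : Type*} [Fintype ι] {v : ι → ℝ} {u : ℝ} {i : ι}
    (h : v i < Real.exp u) :
    (∑ i, v i) * Real.exp (-u) - Fintype.card ι < hinge v u := by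
  have : (∑ i, v i) * Real.exp (-u) - Fintype.card ι = ∑ i, (v i * Real.exp (-u) - 1) := by
    rw [Finset.sum_sub_distrib, Finset.sum_mul]; simp
  rw [this]
  refine Finset.sum_lt_sum (fun i _ => le_max_left _ _) ⟨i, Finset.mem_univ i, lt_max_of_lt_right ?_⟩
  rw [sub_neg, Real.exp_neg, mul_inv_lt_iff₀ (Real.exp_pos u), one_mul]
  exact h

theorem integral_max_mul_exp {v A B α c : ℝ} {Φ : ℝ → ℝ} (hv : 0 < v) (hA : Real.exp A ≤ v)
    (hB : v ≤ Real.exp B)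
    (hΦ : ∀ u, HasDerivAt Φ ((v * Real.exp (-u) - 1) * Real.exp (α * u)) u)
    (hc : Φ (Real.log v) - Φ A = c) :
    ∫ u in A..B, max (v * Real.exp (-u) - 1) 0 * Real.exp (α * u) = c := by
  have hA' : A ≤ Real.log v := (Real.le_log_iff_exp_le hv).mpr hA
  have hB' : Real.log v ≤ B := (Real.log_le_iff_le_exp hv).mpr hB
  have hint : ∀ s t : ℝ, IntervalIntegrable
      (fun u => max (v * Real.exp (-u) - 1) 0 * Real.exp (α * u)) MeasureTheory.volume s t :=
    fun s t => by apply Continuous.intervalIntegrable; fun_prop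
  have h1 : ∫ u in A..(Real.log v), max (v * Real.exp (-u) - 1) 0 * Real.exp (α * u) = c := by
    rw [← hc, ← intervalIntegral.integral_eq_sub_of_hasDerivAt (fun u _ => hΦ u)
      (by apply Continuous.intervalIntegrable; fun_prop)]
    refine intervalIntegral.integral_congr fun u hu => ?_
    rw [Set.uIcc_of_le hA'] at hu
    have : Real.exp u ≤ v := (Real.le_log_iff_exp_le hv).mp hu.2
    rw [max_eq_left]
    rw [sub_nonneg, Real.exp_neg, le_mul_inv_iff₀ (Real.exp_pos u), one_mul]
    exact this
  have h2 : ∫ u in (Real.log v)..B, max (v * Real.exp (-u) - 1) 0 * Real.exp (α * u) = 0 := by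
    rw [intervalIntegral.integral_congr (g := fun _ => (0 : ℝ)), intervalIntegral.integral_zero]
    intro u hu
    rw [Set.uIcc_of_le hB'] at hu
    have : v ≤ Real.exp u := (Real.log_le_iff_le_exp hv).mp hu.1
    simp only
    rw [max_eq_right, zero_mul]
    rw [sub_nonpos, Real.exp_neg, mul_inv_le_iff₀ (Real.exp_pos u), one_mul]
    exact this
  rw [← intervalIntegral.integral_add_adjacent_intervals (hint A (Real.log v)) (hint _ B), h1, h2,
    add_zero]

theorem integral_max_mul_exp_of_ne {v A B α : ℝ} (hv : 0 < v) (hA : Real.exp A ≤ v)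
    (hB : v ≤ Real.exp B) (h0 : α ≠ 0) (h1 : α ≠ 1) :
    ∫ u in A..B, max (v * Real.exp (-u) - 1) 0 * Real.exp (α * u) =
      v ^ α / (α * (α - 1)) - v * (Real.exp ((α - 1) * A) / (α - 1)) + Real.exp (α * A) / α := by
  have h1' : α - 1 ≠ 0 := sub_ne_zero.mpr h1
  refine integral_max_mul_exp
    (Φ := fun u => v * (Real.exp ((α - 1) * u) / (α - 1)) - Real.exp (α * u) / α)
    hv hA hB (fun u => ?_) ?_
  · have e1 : HasDerivAt (fun u => Real.exp ((α - 1) * u)) (Real.exp ((α - 1) * u) * (α - 1)) u := by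
      simpa using ((hasDerivAt_id u).const_mul (α - 1)).exp
    have e2 : HasDerivAt (fun u => Real.exp (α * u)) (Real.exp (α * u) * α) u := by
      simpa using ((hasDerivAt_id u).const_mul α).exp
    refine (((e1.div_const (α - 1)).const_mul v).sub (e2.div_const α)).congr_deriv ?_
    rw [mul_div_assoc, div_self h1', mul_div_assoc, div_self h0,
      show (α - 1) * u = -u + α * u by ring, Real.exp_add]
    ring
  · have e : Real.exp (α * Real.log v) = v ^ α := by
      rw [Real.rpow_def_of_pos hv, mul_comm]
    have e' : v * Real.exp ((α - 1) * Real.log v) = v ^ α := by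
      rw [sub_mul, Real.exp_sub, e, one_mul, Real.exp_log hv]
      field_simp
    rw [← mul_div_assoc, e', e]
    field_simp
    ring

theorem integral_max_mul_exp_one {v A B : ℝ} (hv : 0 < v) (hA : Real.exp A ≤ v)
    (hB : v ≤ Real.exp B) :
    ∫ u in A..B, max (v * Real.exp (-u) - 1) 0 * Real.exp (1 * u) =
      v * Real.log v - v * (A + 1) + Real.exp A := by
  refine integral_max_mul_exp (Φ := fun u => v * u - Real.exp u) hv hA hB (fun u => ?_) ?_
  · refine (((hasDerivAt_id u).const_mul v).sub (Real.hasDerivAt_exp u)).congr_deriv ?_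
    rw [sub_mul, mul_assoc, ← Real.exp_add]
    simp
  · rw [Real.exp_log hv]; ring

theorem integral_hinge_sub {ι : Type*} [Fintype ι] {x y : ι → ℝ} {A B α a b : ℝ} {f : ℝ → ℝ}
    (hsum : ∑ i, x i = ∑ i, y i)
    (hx : ∀ i, ∫ u in A..B, max (x i * Real.exp (-u) - 1) 0 * Real.exp (α * u) =
      f (x i) - x i * a + b)
    (hy : ∀ i, ∫ u in A..B, max (y i * Real.exp (-u) - 1) 0 * Real.exp (α * u) =
      f (y i) - y i * a + b) :
    ∫ u in A..B, (hinge y u - hinge x u) * Real.exp (α * u) = ∑ i, f (y i) - ∑ i, f (x i) := by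
  have hint : ∀ v : ℝ, IntervalIntegrable
      (fun u => max (v * Real.exp (-u) - 1) 0 * Real.exp (α * u)) MeasureTheory.volume A B :=
    fun v => by apply Continuous.intervalIntegrable; fun_prop
  have h : ∀ v : ι → ℝ, ∫ u in A..B, hinge v u * Real.exp (α * u) =
      ∑ i, ∫ u in A..B, max (v i * Real.exp (-u) - 1) 0 * Real.exp (α * u) := by
    intro v
    rw [← intervalIntegral.integral_finsetSum fun i _ => hint (v i)]
    simp only [hinge, Finset.sum_mul]
  have hint' : ∀ v : ι → ℝ, IntervalIntegrable (fun u => hinge v u * Real.exp (α * u))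
      MeasureTheory.volume A B := fun v => by
    have := continuous_hinge v
    apply Continuous.intervalIntegrable; fun_prop
  simp only [sub_mul]
  rw [intervalIntegral.integral_sub (hint' y) (hint' x), h, h, Finset.sum_congr rfl fun i _ => hx i,
    Finset.sum_congr rfl fun i _ => hy i]
  simp only [Finset.sum_add_distrib, Finset.sum_sub_distrib, ← Finset.sum_mul, hsum]
  ring

theorem integral_hinge_sub_of_ne {ι : Type*} [Fintype ι] {x y : ι → ℝ} {A B α : ℝ}
    (hxA : ∀ i, Real.exp A ≤ x i) (hxB : ∀ i, x i ≤ Real.exp B)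
    (hyA : ∀ i, Real.exp A ≤ y i) (hyB : ∀ i, y i ≤ Real.exp B)
    (hsum : ∑ i, x i = ∑ i, y i) (h0 : α ≠ 0) (h1 : α ≠ 1) :
    ∫ u in A..B, (hinge y u - hinge x u) * Real.exp (α * u) =
      (∑ i, y i ^ α - ∑ i, x i ^ α) / (α * (α - 1)) := by
  rw [integral_hinge_sub (f := fun v => v ^ α / (α * (α - 1))) hsum
    (fun i => integral_max_mul_exp_of_ne ((Real.exp_pos A).trans_le (hxA i)) (hxA i) (hxB i) h0 h1)
    (fun i => integral_max_mul_exp_of_ne ((Real.exp_pos A).trans_le (hyA i)) (hyA i) (hyB i) h0 h1),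
    ← Finset.sum_div, ← Finset.sum_div, sub_div]

theorem integral_hinge_sub_one {ι : Type*} [Fintype ι] {x y : ι → ℝ} {A B : ℝ}
    (hxA : ∀ i, Real.exp A ≤ x i) (hxB : ∀ i, x i ≤ Real.exp B)
    (hyA : ∀ i, Real.exp A ≤ y i) (hyB : ∀ i, y i ≤ Real.exp B)
    (hsum : ∑ i, x i = ∑ i, y i) :
    ∫ u in A..B, (hinge y u - hinge x u) * Real.exp (1 * u) =
      ∑ i, y i * Real.log (y i) - ∑ i, x i * Real.log (x i) :=
  integral_hinge_sub (f := fun v => v * Real.log v) hsum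
    (fun i => integral_max_mul_exp_one ((Real.exp_pos A).trans_le (hxA i)) (hxA i) (hxB i))
    (fun i => integral_max_mul_exp_one ((Real.exp_pos A).trans_le (hyA i)) (hyA i) (hyB i))

theorem laplace_nonneg_of_ne {G : ℝ → ℝ} (hG : Continuous G) {A B : ℝ}
    (h : ∀ α, α ≠ 0 → α ≠ 1 → 0 ≤ ∫ u in A..B, G u * Real.exp (α * u)) (α : ℝ) :
    0 ≤ ∫ u in A..B, G u * Real.exp (α * u) := by
  have hc : Continuous fun α : ℝ => ∫ u in A..B, G u * Real.exp (α * u) := by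
    refine intervalIntegral.continuous_parametric_intervalIntegral_of_continuous'
      (f := fun (α : ℝ) u => G u * Real.exp (α * u)) ?_ A B
    simp only [Function.uncurry_def]
    fun_prop
  have hd : Dense ({0, 1} : Set ℝ)ᶜ := (Set.toFinite _).countable.dense_compl ℝ
  have hsub : closure ({0, 1} : Set ℝ)ᶜ ⊆ {α | 0 ≤ ∫ u in A..B, G u * Real.exp (α * u)} :=
    (isClosed_le continuous_const hc).closure_subset_iff.mpr fun α hα => by
      simp only [Set.mem_compl_iff, Set.mem_insert_iff, Set.mem_singleton_iff, not_or] at hα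
      exact h α hα.1 hα.2
  exact hsub (hd α)

theorem exists_exp_bounds {ι : Type*} [Fintype ι] {x y : ι → ℝ} (hx : ∀ i, 0 < x i)
    (hy : ∀ i, 0 < y i) :
    ∃ A B, A ≤ B ∧ (∀ i, Real.exp A ≤ x i) ∧ (∀ i, x i ≤ Real.exp B) ∧
      (∀ i, Real.exp A ≤ y i) ∧ ∀ i, y i ≤ Real.exp B := by
  set S := ∑ i, (|Real.log (x i)| + |Real.log (y i)|)
  have hS : ∀ i, |Real.log (x i)| + |Real.log (y i)| ≤ S := fun i =>
    Finset.single_le_sum (f := fun i => |Real.log (x i)| + |Real.log (y i)|)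
      (fun j _ => by positivity) (Finset.mem_univ i)
  have hS0 : 0 ≤ S := Finset.sum_nonneg fun j _ => by positivity
  refine ⟨-S, S, by linarith, fun i => ?_, fun i => ?_, fun i => ?_, fun i => ?_⟩
  · rw [← Real.le_log_iff_exp_le (hx i)]
    linarith [hS i, neg_abs_le (Real.log (x i)), abs_nonneg (Real.log (y i))]
  · rw [← Real.log_le_iff_le_exp (hx i)]
    linarith [hS i, le_abs_self (Real.log (x i)), abs_nonneg (Real.log (y i))]
  · rw [← Real.le_log_iff_exp_le (hy i)]
    linarith [hS i, neg_abs_le (Real.log (y i)), abs_nonneg (Real.log (x i))]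
  · rw [← Real.log_le_iff_le_exp (hy i)]
    linarith [hS i, le_abs_self (Real.log (y i)), abs_nonneg (Real.log (x i))]

theorem renyiH_le_iff {d : ℕ} [NeZero d] {x y : Fin d → ℝ} (hx : ∀ i, 0 < x i) (hy : ∀ i, 0 < y i)
    {α : ℝ} (h0 : α ≠ 0) (h1 : α ≠ 1) :
    renyiH α y ≤ renyiH α x ↔ 0 ≤ (∑ i, y i ^ α - ∑ i, x i ^ α) / (α * (α - 1)) := by
  have pos : ∀ v : Fin d → ℝ, (∀ i, 0 < v i) → 0 < ∑ i, v i ^ α := fun v hv =>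
    Finset.sum_pos (fun i _ => Real.rpow_pos_of_pos (hv i) α) Finset.univ_nonempty
  simp only [renyiH, if_neg h0, if_neg h1]
  rcases lt_trichotomy α 0 with h | h | h
  · have h3 : 0 < 1 - α := by linarith
    rw [Real.sign_of_neg h, mul_le_mul_left_of_neg (div_neg_of_neg_of_pos (by norm_num) h3),
      Real.log_le_log_iff (pos x hx) (pos y hy),
      le_div_iff₀ (by nlinarith), zero_mul, sub_nonneg]
  · exact absurd h h0
  · rw [Real.sign_of_pos h]
    rcases lt_or_gt_of_ne h1 with h' | h'
    · rw [mul_le_mul_iff_of_pos_left (div_pos one_pos (by linarith)),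
        Real.log_le_log_iff (pos y hy) (pos x hx), ← neg_div_neg_eq,
        le_div_iff₀ (by nlinarith), zero_mul, neg_sub, sub_nonneg]
    · rw [mul_le_mul_left_of_neg (div_neg_of_pos_of_neg one_pos (by linarith)),
        Real.log_le_log_iff (pos x hx) (pos y hy),
        le_div_iff₀ (by nlinarith), zero_mul, sub_nonneg]

theorem power_sum_monotone_of_PMaj_tensor {d k : ℕ} {x y : Fin d → ℝ} {c : Fin k → ℝ}
    (hx : ∀ i, 0 < x i) (hy : ∀ i, 0 < y i) (hsum : ∑ i, x i = ∑ i, y i) (hc : IsProbVec c)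
    (h : PMaj (pvTensor x c) (pvTensor y c)) {α : ℝ} (h0 : α ≠ 0) (h1 : α ≠ 1) :
    0 ≤ (∑ i, y i ^ α - ∑ i, x i ^ α) / (α * (α - 1)) := by
  set T := {j : Fin k // 0 < c j}
  set X : Fin d × T → ℝ := fun q => x q.1 * c q.2
  set Y : Fin d × T → ℝ := fun q => y q.1 * c q.2
  have hX : ∀ q, 0 < X q := fun q => mul_pos (hx _) q.2.2
  have hY : ∀ q, 0 < Y q := fun q => mul_pos (hy _) q.2.2
  have hXY : ∑ q, X q = ∑ q, Y q := by
    simp only [X, Y, Fintype.sum_prod_type, ← Finset.mul_sum, ← Finset.sum_mul, hsum]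
  have hrestrict : ∀ (v : Fin d → ℝ) (t : ℝ), 0 ≤ t →
      ∑ q : Fin d × T, max (v q.1 * c q.2 - t) 0 = ∑ q, max (pvTensor v c q - t) 0 := by
    intro v t ht
    rw [Fintype.sum_prod_type, Fintype.sum_prod_type]
    refine Finset.sum_congr rfl fun i _ => ?_
    simp only [pvTensor]
    rw [← Finset.sum_subtype (Finset.univ.filter fun j => 0 < c j) (by simp)
      (fun j => max (v i * c j - t) 0)]
    refine Finset.sum_subset (Finset.subset_univ _) fun j _ hj => ?_
    have : c j = 0 := le_antisymm (by simpa using hj) (hc.1 j)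
    rw [this, mul_zero, zero_sub, max_eq_right (by linarith)]
  have hhinge : ∀ u, hinge X u ≤ hinge Y u := by
    intro u
    refine le_of_mul_le_mul_left ?_ (Real.exp_pos u)
    rw [← sum_max_sub_exp, ← sum_max_sub_exp, hrestrict x _ (Real.exp_pos u).le,
      hrestrict y _ (Real.exp_pos u).le]
    exact h.sum_max_le (Real.exp_pos u).le
  obtain ⟨A, B, hAB, hXA, hXB, hYA, hYB⟩ := exists_exp_bounds hX hY
  have hI := integral_hinge_sub_of_ne hXA hXB hYA hYB hXY h0 h1
  have hI0 : 0 ≤ ∫ u in A..B, (hinge Y u - hinge X u) * Real.exp (α * u) :=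
    intervalIntegral.integral_nonneg hAB fun u _ =>
      mul_nonneg (sub_nonneg.mpr (hhinge u)) (Real.exp_pos _).le
  have hfac : ∀ v : Fin d → ℝ, (∀ i, 0 < v i) → ∑ q : Fin d × T, (v q.1 * c q.2) ^ α =
      (∑ i, v i ^ α) * ∑ j : T, c j ^ α := by
    intro v hv
    rw [Fintype.sum_prod_type, Finset.sum_mul_sum]
    exact Finset.sum_congr rfl fun i _ => Finset.sum_congr rfl fun j _ =>
      Real.mul_rpow (hv i).le j.2.le
  have hS : 0 < ∑ j : T, c j ^ α := by
    obtain ⟨j, -, hj⟩ := Finset.exists_lt_of_sum_lt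
      (s := Finset.univ) (f := fun _ : Fin k => (0 : ℝ)) (g := c) (by simp [hc.2])
    exact Finset.sum_pos (fun j _ => Real.rpow_pos_of_pos j.2 α) ⟨⟨j, hj⟩, Finset.mem_univ _⟩
  rw [hI, hfac x hx, hfac y hy, ← sub_mul, mul_div_right_comm] at hI0
  exact nonneg_of_mul_nonneg_left hI0 hS

theorem renyiH_le_of_approx_trumping {d : ℕ} {x y : Fin d → ℝ} (hx : IsProbVec x)
    (hy : IsProbVec y) (hxpos : ∀ i, 0 < x i) (hypos : ∀ i, 0 < y i)
    (h : ∀ ε > (0 : ℝ), ∃ xε : Fin d → ℝ, IsProbVec xε ∧ (∑ i, |x i - xε i|) ≤ ε ∧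
        ∃ (k : ℕ) (c : Fin k → ℝ), IsProbVec c ∧ PMaj (pvTensor xε c) (pvTensor y c)) (α : ℝ) :
    renyiH α y ≤ renyiH α x := by
  have : NeZero d := ⟨by rintro rfl; simpa using hx.2⟩
  have hpow : ∀ α : ℝ, α ≠ 0 → α ≠ 1 →
      0 ≤ (∑ i, y i ^ α - ∑ i, x i ^ α) / (α * (α - 1)) := by
    intro α h0 h1
    choose w hw hwx hwc using fun n : ℕ => h (1 / ((n : ℝ) + 1)) Nat.one_div_pos_of_nat
    have hlim : ∀ i, Filter.Tendsto (fun n => w n i) Filter.atTop (nhds (x i)) := by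
      intro i
      rw [tendsto_iff_dist_tendsto_zero]
      refine squeeze_zero (fun _ => dist_nonneg) (fun n => ?_)
        (tendsto_one_div_add_atTop_nhds_zero_nat (𝕜 := ℝ))
      rw [dist_comm, Real.dist_eq]
      exact (Finset.single_le_sum (f := fun i => |x i - w n i|) (fun j _ => abs_nonneg _)
        (Finset.mem_univ i)).trans (hwx n)
    have hlim' : Filter.Tendsto (fun n => (∑ i, y i ^ α - ∑ i, w n i ^ α) / (α * (α - 1)))
        Filter.atTop (nhds ((∑ i, y i ^ α - ∑ i, x i ^ α) / (α * (α - 1)))) :=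
      (tendsto_const_nhds.sub (tendsto_finsetSum _ fun i _ =>
        (hlim i).rpow_const (Or.inl (hxpos i).ne'))).div_const _
    refine ge_of_tendsto hlim' ?_
    filter_upwards [Filter.eventually_all.mpr fun i => (hlim i).eventually_const_lt (hxpos i)]
      with n hn
    obtain ⟨k, c, hc, hmaj⟩ := hwc n
    exact power_sum_monotone_of_PMaj_tensor hn hypos ((hw n).2.trans hy.2.symm) hc hmaj h0 h1
  by_cases h0 : α = 0
  · subst h0
    simp [renyiH, hxpos, hypos]
  by_cases h1 : α = 1
  · subst h1
    have hsum := hx.2.trans hy.2.symm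
    obtain ⟨A, B, hAB, hXA, hXB, hYA, hYB⟩ := exists_exp_bounds hxpos hypos
    have hG : Continuous fun u => hinge y u - hinge x u :=
      (continuous_hinge y).sub (continuous_hinge x)
    have := laplace_nonneg_of_ne hG (A := A) (B := B) (fun α h0 h1 => by
      rw [integral_hinge_sub_of_ne hXA hXB hYA hYB hsum h0 h1]; exact hpow α h0 h1) 1
    rw [integral_hinge_sub_one hXA hXB hYA hYB hsum] at this
    simp only [renyiH, if_neg one_ne_zero, if_true]
    linarith
  · exact (renyiH_le_iff hxpos hypos h0 h1).mpr (hpow α h0 h1)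

theorem le_of_power_sums_le {d : ℕ} {p q : Fin d → ℝ} (hq : ∀ i, 0 < q i) {Q : ℝ}
    (hQ : ∀ i, q i ≤ Q) (hp : ∀ i, 0 < p i)
    (h : ∀ n : ℕ, 2 ≤ n → ∑ i, p i ^ n ≤ ∑ i, q i ^ n) (i : Fin d) : p i ≤ Q := by
  by_contra! hlt
  have hQ0 : 0 < Q := (hq i).trans_le (hQ i)
  have ht := tendsto_pow_atTop_atTop_of_one_lt ((one_lt_div hQ0).mpr hlt)
  obtain ⟨n, hn, hn2⟩ :=
    ((ht.eventually_gt_atTop (d : ℝ)).and (Filter.eventually_ge_atTop 2)).exists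
  rw [div_pow, lt_div_iff₀ (by positivity)] at hn
  have h1 : p i ^ n ≤ ∑ i, p i ^ n :=
    Finset.single_le_sum (f := fun i => p i ^ n) (fun j _ => (pow_pos (hp j) n).le)
      (Finset.mem_univ i)
  have h2 : ∑ i, q i ^ n ≤ d * Q ^ n := by
    refine (Finset.sum_le_card_nsmul _ _ (Q ^ n) fun j _ =>
      pow_le_pow_left₀ (hq j).le (hQ j) n).trans_eq ?_
    simp
  linarith [h n hn2]

/-- The binomial distribution on a geometric progression is a catalyst as soon as the binomial
convolution of the hinge difference is nonnegative. -/
theorem exists_catalyst_of_binomial_convolution {d N : ℕ} {x y : Fin d → ℝ} (hx : IsProbVec x)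
    (hy : IsProbVec y) {η : ℝ} (h : ∀ u, 0 ≤ ∑ k ∈ Finset.range (N + 1),
      (N.choose k : ℝ) * (hinge y (u - k * η) - hinge x (u - k * η))) :
    ∃ (k : ℕ) (c : Fin k → ℝ), IsProbVec c ∧ PMaj (pvTensor x c) (pvTensor y c) := by
  set Z := ∑ S : Finset (Fin N), Real.exp (S.card * η)
  have hZ : 0 < Z := Finset.sum_pos (fun S _ => Real.exp_pos _) Finset.univ_nonempty
  set w : Finset (Fin N) → ℝ := fun S => Real.exp (S.card * η) / Z with hw
  have hw0 : ∀ S, 0 < w S := fun S => div_pos (Real.exp_pos _) hZ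
  set e := Fintype.equivFin (Finset (Fin N))
  refine ⟨_, fun j => w (e.symm j), ⟨fun j => (hw0 _).le, ?_⟩, PMaj.of_sum_max_le
    (fun q => mul_nonneg (hx.1 _) (hw0 _).le) (fun q => mul_nonneg (hy.1 _) (hw0 _).le) ?_ ?_⟩
  · rw [e.symm.sum_comp w, hw, ← Finset.sum_div, div_self hZ.ne']
  · simp only [pvTensor, Fintype.sum_prod_type, ← Finset.mul_sum, ← Finset.sum_mul, hx.2, hy.2]
  intro t ht
  have hterm : ∀ v : Fin d → ℝ, ∑ q, max (pvTensor v (fun j => w (e.symm j)) q - t) 0 =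
      t * ∑ k ∈ Finset.range (N + 1), (N.choose k : ℝ) * hinge v (Real.log (t * Z) - k * η) := by
    intro v
    rw [Fintype.sum_prod_type_right]
    simp only [pvTensor]
    rw [e.symm.sum_comp fun S => ∑ i, max (v i * w S - t) 0]
    have h1 : ∀ S : Finset (Fin N), ∑ i, max (v i * w S - t) 0 =
        t * hinge v (Real.log (t * Z) - S.card * η) := by
      intro S
      rw [hinge, Finset.mul_sum]
      refine Finset.sum_congr rfl fun i _ => ?_
      rw [mul_max_of_nonneg _ _ ht.le, mul_zero, neg_sub, Real.exp_sub,
        Real.exp_log (mul_pos ht hZ)]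
      congr 1
      simp only [hw]
      field_simp
    simp only [h1]
    rw [← Finset.mul_sum, ← Finset.powerset_univ,
      Finset.sum_powerset_apply_card (fun m => hinge v (Real.log (t * Z) - m * η))]
    simp
  rw [hterm, hterm]
  refine mul_le_mul_of_nonneg_left ?_ ht.le
  have := h (Real.log (t * Z))
  simp only [mul_sub, Finset.sum_sub_distrib] at this
  linarith

theorem max_exp_neg_sub_card_le_hinge {d : ℕ} {x : Fin d → ℝ} (hx : IsProbVec x) (u : ℝ) :
    max (Real.exp (-u) - d) 0 ≤ hinge x u := by
  refine max_le ?_ (Finset.sum_nonneg fun i _ => le_max_right _ _)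
  simpa [hx.2] using sum_sub_card_le_hinge x u

theorem hinge_uniform {d : ℕ} [NeZero d] (u : ℝ) :
    hinge (fun _ : Fin d => 1 / (d : ℝ)) u = max (Real.exp (-u) - d) 0 := by
  have hd : (0 : ℝ) < d := by exact_mod_cast Nat.pos_of_ne_zero (NeZero.ne d)
  simp only [hinge, Finset.sum_const, Finset.card_univ, Fintype.card_fin, nsmul_eq_mul]
  rw [mul_max_of_nonneg _ _ hd.le, mul_zero]
  congr 1
  field_simp

theorem hinge_mix_le {ι : Type*} [Fintype ι] (x z : ι → ℝ) {δ : ℝ} (h0 : 0 ≤ δ) (h1 : δ ≤ 1)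
    (u : ℝ) : hinge (fun i => (1 - δ) * x i + δ * z i) u ≤ (1 - δ) * hinge x u + δ * hinge z u := by
  simp only [hinge, Finset.mul_sum]
  rw [← Finset.sum_add_distrib]
  refine Finset.sum_le_sum fun i _ => max_le ?_ ?_
  · have a1 := mul_le_mul_of_nonneg_left (le_max_left (x i * Real.exp (-u) - 1) 0) (sub_nonneg.mpr h1)
    have a2 := mul_le_mul_of_nonneg_left (le_max_left (z i * Real.exp (-u) - 1) 0) h0
    linarith
  · exact add_nonneg (mul_nonneg (sub_nonneg.mpr h1) (le_max_right _ _))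
      (mul_nonneg h0 (le_max_right _ _))

theorem hinge_mix_uniform_le {d : ℕ} [NeZero d] {x : Fin d → ℝ} (hx : IsProbVec x) {δ : ℝ}
    (h0 : 0 ≤ δ) (h1 : δ ≤ 1) (u : ℝ) :
    hinge (fun i => (1 - δ) * x i + δ * (1 / d)) u ≤ hinge x u := by
  have h2 := hinge_mix_le x (fun _ => 1 / (d : ℝ)) h0 h1 u
  rw [hinge_uniform] at h2
  have h3 := mul_le_mul_of_nonneg_left (max_exp_neg_sub_card_le_hinge hx u) h0
  linarith

theorem exists_catalyst_mix_uniform {d : ℕ} [NeZero d] {x y : Fin d → ℝ} (hx : IsProbVec x)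
    (hy : IsProbVec y) (hxpos : ∀ i, 0 < x i) (hypos : ∀ i, 0 < y i)
    (hpow : ∀ α : ℝ, α ≠ 0 → α ≠ 1 → 0 ≤ (∑ i, y i ^ α - ∑ i, x i ^ α) / (α * (α - 1)))
    (hne : ∃ i, x i ≠ 1 / d) {δ : ℝ} (hδ0 : 0 < δ) (hδ1 : δ < 1)
    (hmix : IsProbVec fun i => (1 - δ) * x i + δ * (1 / d)) :
    ∃ (k : ℕ) (c : Fin k → ℝ), IsProbVec c ∧
      PMaj (pvTensor (fun i => (1 - δ) * x i + δ * (1 / d)) c) (pvTensor y c) := by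
  have hd : (0 : ℝ) < d := by exact_mod_cast Nat.pos_of_ne_zero (NeZero.ne d)
  have hδ1' : 0 < 1 - δ := sub_pos.mpr hδ1
  obtain ⟨iM, hiM⟩ := Finite.exists_max x
  obtain ⟨im, him⟩ := Finite.exists_min x
  obtain ⟨jM, hjM⟩ := Finite.exists_max y
  obtain ⟨jm, hjm⟩ := Finite.exists_min y
  have hsum1 : ∑ _i : Fin d, 1 / (d : ℝ) = 1 := by simp [hd.ne']
  obtain ⟨i₀, hi₀⟩ := hne
  have hMgt : 1 / (d : ℝ) < x iM := by
    by_contra! hle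
    exact hi₀ ((Finset.sum_eq_sum_iff_of_le fun i _ => (hiM i).trans hle).mp
      (hx.2.trans hsum1.symm) i₀ (Finset.mem_univ _))
  have hmlt : x im < 1 / (d : ℝ) := by
    by_contra! hle
    exact hi₀ ((Finset.sum_eq_sum_iff_of_le fun i _ => hle.trans (him i)).mp
      (hsum1.trans hx.2.symm) i₀ (Finset.mem_univ _)).symm
  have hMM : x iM ≤ y jM := by
    refine le_of_power_sums_le hypos hjM hxpos (fun n hn => ?_) iM
    have hn' : (2 : ℝ) ≤ n := by exact_mod_cast hn
    have := hpow n (by linarith) (by linarith)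
    rw [le_div_iff₀ (by nlinarith), zero_mul, sub_nonneg] at this
    simpa only [Real.rpow_natCast] using this
  have hmm : y jm ≤ x im := by
    refine (inv_le_inv₀ (hxpos im) (hypos jm)).mp ?_
    refine le_of_power_sums_le (p := fun i => (x i)⁻¹) (q := fun i => (y i)⁻¹)
      (fun i => inv_pos.mpr (hypos i)) (fun i => inv_anti₀ (hypos jm) (hjm i))
      (fun i => inv_pos.mpr (hxpos i)) (fun n hn => ?_) im
    have hn' : (2 : ℝ) ≤ n := by exact_mod_cast hn
    have := hpow (-n) (by linarith) (by linarith)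
    rw [le_div_iff₀ (by nlinarith), zero_mul, sub_nonneg] at this
    simpa only [Real.rpow_neg (hxpos _).le, Real.rpow_neg (hypos _).le, Real.rpow_natCast,
      inv_pow] using this
  set xδ : Fin d → ℝ := fun i => (1 - δ) * x i + δ * (1 / d) with hxδ
  have hxδM : ∀ i, xδ i ≤ xδ iM := fun i => by
    simp only [hxδ]; nlinarith [hiM i]
  have hxδm : ∀ i, xδ im ≤ xδ i := fun i => by
    simp only [hxδ]; nlinarith [him i]
  have hM' : xδ iM < x iM := by simp only [hxδ]; nlinarith
  have hm' : x im < xδ im := by simp only [hxδ]; nlinarith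
  have hsumδ : ∑ i, xδ i = ∑ i, y i := hmix.2.trans hy.2.symm
  have hexpA : Real.exp (Real.log (y jm)) = y jm := Real.exp_log (hypos jm)
  have hexpB : Real.exp (Real.log (y jM)) = y jM := Real.exp_log (hypos jM)
  have hm0 : 0 < xδ im := (hxpos im).trans hm'
  have hM0 : 0 < xδ iM := hm0.trans_le (hxδM im)
  have hcont : ∀ v w : Fin d → ℝ, Continuous fun u => hinge v u - hinge w u := fun v w =>
    (continuous_hinge v).sub (continuous_hinge w)
  have hAB : Real.log (y jm) < Real.log (y jM) := Real.log_lt_log (hypos jm) (by linarith)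
  suffices h : ∃ (η : ℝ) (N : ℕ), ∀ u, 0 ≤ ∑ k ∈ Finset.range (N + 1),
      (N.choose k : ℝ) * (hinge y (u - k * η) - hinge xδ (u - k * η)) by
    obtain ⟨η, N, h⟩ := h
    exact exists_catalyst_of_binomial_convolution hmix hy h
  refine exists_binomial_convolution_nonneg (hcont y xδ)
    (A := Real.log (y jm)) (A' := Real.log (xδ im)) (B' := Real.log (xδ iM))
    (B := Real.log (y jM)) (Real.log_lt_log (hypos jm) (hmm.trans_lt hm'))
    (Real.log_lt_log hM0 (hM'.trans_le hMM)) hAB ?_ ?_ ?_ ?_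
  · intro u hu
    have h1 : y jm < Real.exp u := (Real.log_lt_iff_lt_exp (hypos jm)).mp hu.1
    have h2 : Real.exp u < xδ im := (Real.lt_log_iff_exp_lt hm0).mp hu.2
    have h3 := hinge_eq_sum_sub_card (v := xδ) fun i => h2.le.trans (hxδm i)
    have h4 := sum_sub_card_lt_hinge h1
    rw [h3, hsumδ]
    linarith
  · intro u hu
    have h1 : xδ iM < Real.exp u := (Real.log_lt_iff_lt_exp hM0).mp hu.1
    have h2 : Real.exp u < y jM := (Real.lt_log_iff_exp_lt (hypos jM)).mp hu.2
    rw [hinge_eq_zero (v := xδ) fun i => (hxδM i).trans h1.le, sub_zero]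
    exact hinge_pos h2
  · intro u hu
    rcases le_or_gt u (Real.log (y jm)) with h1 | h1
    · have h2 : Real.exp u ≤ y jm := (Real.le_log_iff_exp_le (hypos jm)).mp h1
      rw [hinge_eq_sum_sub_card (v := y) fun i => h2.trans (hjm i),
        hinge_eq_sum_sub_card (v := xδ) fun i => by linarith [hxδm i], hsumδ, sub_self]
    · have h2 : y jM ≤ Real.exp u :=
        (Real.log_le_iff_le_exp (hypos jM)).mp (not_lt.mp fun h2 => hu ⟨h1, h2⟩)
      rw [hinge_eq_zero (v := y) fun i => (hjM i).trans h2,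
        hinge_eq_zero (v := xδ) fun i => by linarith [hxδM i], sub_self]
  · intro α
    have hsum := hx.2.trans hy.2.symm
    have h1 : 0 ≤ ∫ u in (Real.log (y jm))..(Real.log (y jM)),
        (hinge y u - hinge x u) * Real.exp (α * u) := by
      refine laplace_nonneg_of_ne (hcont y x) (fun α h0 h1 => ?_) α
      rw [integral_hinge_sub_of_ne (fun i => by rw [hexpA]; exact hmm.trans (him i))
        (fun i => by rw [hexpB]; exact (hiM i).trans hMM) (fun i => by rw [hexpA]; exact hjm i)
        (fun i => by rw [hexpB]; exact hjM i) hsum h0 h1]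
      exact hpow α h0 h1
    have hint : ∀ v w : Fin d → ℝ, Continuous
        fun u => (hinge v u - hinge w u) * Real.exp (α * u) := fun v w => by
      have := hcont v w
      fun_prop
    have h2 : 0 < ∫ u in (Real.log (y jm))..(Real.log (y jM)),
        (hinge x u - hinge xδ u) * Real.exp (α * u) := by
      refine intervalIntegral.integral_pos hAB (hint x xδ).continuousOn (fun u _ =>
        mul_nonneg (sub_nonneg.mpr (hinge_mix_uniform_le hx hδ0.le hδ1.le u)) (Real.exp_pos _).le)
        ⟨Real.log (xδ iM), ⟨Real.log_le_log (hypos jm) ?_, Real.log_le_log hM0 ?_⟩, ?_⟩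
      · linarith [hxδM im]
      · linarith
      · refine mul_pos ?_ (Real.exp_pos _)
        rw [hinge_eq_zero (v := xδ) fun i => by rw [Real.exp_log hM0]; exact hxδM i, sub_zero]
        exact hinge_pos (i := iM) (by rwa [Real.exp_log hM0])
    have h3 := intervalIntegral.integral_add
      ((hint y x).intervalIntegrable (Real.log (y jm)) (Real.log (y jM)) (μ := MeasureTheory.volume))
      ((hint x xδ).intervalIntegrable _ _)
    rw [show (fun u => (hinge y u - hinge xδ u) * Real.exp (α * u)) =
      fun u => (hinge y u - hinge x u) * Real.exp (α * u) +
        (hinge x u - hinge xδ u) * Real.exp (α * u) from funext fun u => by ring, h3]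
    linarith

theorem approx_trumping_of_renyiH_le {d : ℕ} {x y : Fin d → ℝ} (hx : IsProbVec x)
    (hy : IsProbVec y) (hxpos : ∀ i, 0 < x i) (hypos : ∀ i, 0 < y i)
    (h : ∀ α : ℝ, renyiH α y ≤ renyiH α x) {ε : ℝ} (hε : 0 < ε) :
    ∃ xε : Fin d → ℝ, IsProbVec xε ∧ (∑ i, |x i - xε i|) ≤ ε ∧
      ∃ (k : ℕ) (c : Fin k → ℝ), IsProbVec c ∧ PMaj (pvTensor xε c) (pvTensor y c) := by
  have : NeZero d := ⟨by rintro rfl; simpa using hx.2⟩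
  have hd : (0 : ℝ) < d := by exact_mod_cast Nat.pos_of_ne_zero (NeZero.ne d)
  by_cases hne : ∃ i, x i ≠ 1 / d
  · set δ := min (ε / 2) (1 / 2)
    have hδ0 : 0 < δ := lt_min (by positivity) (by norm_num)
    have hδ1 : δ < 1 := (min_le_right _ _).trans_lt (by norm_num)
    have hδε : δ ≤ ε / 2 := min_le_left _ _
    have hmix : IsProbVec fun i => (1 - δ) * x i + δ * (1 / d) := by
      refine ⟨fun i => ?_, ?_⟩
      · have := mul_nonneg (sub_nonneg.mpr hδ1.le) (hx.1 i)
        positivity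
      · rw [Finset.sum_add_distrib, ← Finset.mul_sum, hx.2]
        simp
        field_simp
        ring
    refine ⟨_, hmix, ?_, exists_catalyst_mix_uniform hx hy hxpos hypos
      (fun α h0 h1 => (renyiH_le_iff hxpos hypos h0 h1).mp (h α)) hne hδ0 hδ1 hmix⟩
    calc ∑ i, |x i - ((1 - δ) * x i + δ * (1 / d))| ≤ ∑ i, δ * (x i + 1 / d) := by
          refine Finset.sum_le_sum fun i _ => ?_
          rw [show x i - ((1 - δ) * x i + δ * (1 / d)) = δ * (x i - 1 / d) by ring, abs_mul,
            abs_of_pos hδ0]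
          refine mul_le_mul_of_nonneg_left (abs_le.mpr ?_) hδ0.le
          have : 0 < 1 / (d : ℝ) := by positivity
          constructor <;> linarith [hxpos i]
      _ = δ * 2 := by
          rw [← Finset.mul_sum, Finset.sum_add_distrib, hx.2]
          simp [hd.ne']
          norm_num
      _ ≤ ε := by linarith
  · push Not at hne
    obtain rfl : x = fun _ => 1 / (d : ℝ) := funext hne
    refine ⟨_, hx, by simpa using hε.le,
      exists_catalyst_of_binomial_convolution (N := 0) (η := 0) hx hy fun u => ?_⟩
    simp only [hinge_uniform]
    simpa using max_exp_neg_sub_card_le_hinge hy u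

/-- Brandão et al., Proposition 4 (Supplementary Information): approximate trumping
(allowing an arbitrarily small ℓ₁-error in the initial state) is equivalent to
monotonicity of all Rényi entropies. -/
theorem approx_trumping_iff_renyi {d : ℕ} (x y : Fin d → ℝ)
    (hx : IsProbVec x) (hy : IsProbVec y)
    (hxpos : ∀ i, 0 < x i) (hypos : ∀ i, 0 < y i) :
    (∀ ε > (0 : ℝ), ∃ xε : Fin d → ℝ, IsProbVec xε ∧ (∑ i, |x i - xε i|) ≤ ε ∧
        ∃ (k : ℕ) (c : Fin k → ℝ), IsProbVec c ∧ PMaj (pvTensor xε c) (pvTensor y c)) ↔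
      (∀ α : ℝ, renyiH α y ≤ renyiH α x) := by
  exact ⟨fun h => renyiH_le_of_approx_trumping hx hy hxpos hypos h,
    fun h _ hε => approx_trumping_of_renyiH_le hx hy hxpos hypos h hε⟩
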